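/- The doubly robust (DR) estimator is unbiased for the ideal loss for any imputation model: for every prediction matrix R̂ ∈ ℝ^{m×n} and every imputed-error matrix ℓ̂ ∈ ℝ^{m×n}, the expectation over the random observation matrix O of L̂_DR(R̂ | O) := (1/(mn)) Σ_{(u,i)∈D} { ℓ̂_{u,i} + O_{u,i} · (ℓ(R_{u,i}, R̂_{u,i}) − ℓ̂_{u,i}) / P_{u,i} } equals the ideal loss L^ℓ_ideal(R̂) = (1/(mn)) Σ_{(u,i)∈D} ℓ(R_{u,i}, R̂_{u,i}). -/

import Mathlib

/-!
Linearity of expectation reduces the claim to one entry at a time, and the expectation of a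
function of one entry only involves the law of that entry. There the propensity `p` with which
the correction `(e - ê) / p` is applied cancels the weight `1 / p`, leaving `ê + (e - ê) = e`.
-/

section ProductWeights

variable {ι : Type*} [Fintype ι] [DecidableEq ι] {α : ι → Type*} [∀ i, Fintype (α i)]
  {𝕜 : Type*} [CommSemiring 𝕜]

theorem sum_prod_mul_apply (w : ∀ i, α i → 𝕜) (j : ι) (hw : ∀ i ≠ j, ∑ a, w i a = 1)
    (f : α j → 𝕜) :
    ∑ x : ∀ i, α i, (∏ i, w i (x i)) * f (x j) = ∑ a, w j a * f a := by
  -- Absorbing `f` into the factor at `j` turns the summand into a product over `ι`.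
  let v : ∀ i, α i → 𝕜 := w * Pi.mulSingle j f
  have v_self : v j = w j * f := by simp [v]
  have v_of_ne (i : ι) (hij : i ≠ j) : v i = w i := by simp [v, hij]
  have prod_v (x : ∀ i, α i) : ∏ i, v i (x i) = (∏ i, w i (x i)) * f (x j) := by
    have prod_mulSingle : ∏ i, (Pi.mulSingle j f : ∀ i, α i → 𝕜) i (x i) = f (x j) := by
      rw [Fintype.prod_eq_single j fun i hij => by simp [hij], Pi.mulSingle_eq_same]
    simp only [v, Pi.mul_apply, Finset.prod_mul_distrib, prod_mulSingle]
  calc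
    ∑ x : ∀ i, α i, (∏ i, w i (x i)) * f (x j) = ∑ x : ∀ i, α i, ∏ i, v i (x i) := by
      simp_rw [prod_v]
    _ = ∏ i, ∑ a, v i a := (Fintype.prod_sum v).symm
    _ = ∑ a, v j a := Fintype.prod_eq_single j fun i hij => by rw [v_of_ne i hij, hw i hij]
    _ = ∑ a, w j a * f a := by simp_rw [v_self, Pi.mul_apply]

theorem sum_prod_mul_sum_apply (w : ∀ i, α i → 𝕜) (hw : ∀ i, ∑ a, w i a = 1)
    (f : ∀ i, α i → 𝕜) :
    ∑ x : ∀ i, α i, (∏ i, w i (x i)) * ∑ i, f i (x i) = ∑ i, ∑ a, w i a * f i a := by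
  simp_rw [Finset.mul_sum]
  rw [Finset.sum_comm]
  exact Finset.sum_congr rfl fun i _ => sum_prod_mul_apply w i (fun j _ => hw j) (f i)

end ProductWeights

/-- The mass function of the Bernoulli law with parameter `p`, with `true` as success. It takes
values in a ring, so as to weight finite sums there; `p` is not restricted to `[0, 1]`. -/
def bernoulliWeight {𝕜 : Type*} [Ring 𝕜] (p : 𝕜) (b : Bool) : 𝕜 :=
  if b then p else 1 - p

theorem sum_bernoulliWeight {𝕜 : Type*} [Ring 𝕜] (p : 𝕜) : ∑ b, bernoulliWeight p b = 1 := by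
  simp [bernoulliWeight]

section DoublyRobust

variable {𝕜 : Type*} [Field 𝕜]

/-- The summand of the doubly robust estimator at one user–item pair: the imputed error `ehat`,
corrected when the pair is observed (`o = true`) by the residual of the true error `e`, weighted
by the inverse of the propensity `p`. -/
def doublyRobustError (e ehat p : 𝕜) (o : Bool) : 𝕜 :=
  ehat + (if o then 1 else 0) * (e - ehat) / p

theorem sum_bernoulliWeight_mul_doublyRobustError (e ehat : 𝕜) {p : 𝕜} (hp : p ≠ 0) :
    ∑ o, bernoulliWeight p o * doublyRobustError e ehat p o = e := by
  calc
    ∑ o, bernoulliWeight p o * doublyRobustError e ehat p o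
        = p * (ehat + (e - ehat) / p) + (1 - p) * ehat := by
      simp [bernoulliWeight, doublyRobustError]
    _ = e := by
      field_simp
      ring

-- `c` stands for the normalization of the loss: `1 / (m * n)` for an `m × n` rating matrix.
theorem dr_estimator_unbiased_general {ι : Type*} [Fintype ι] [DecidableEq ι]
    (c : 𝕜) (e ehat P : ι → 𝕜) (hP : ∀ i, P i ≠ 0) :
    ∑ O : ι → Bool, (∏ i, bernoulliWeight (P i) (O i)) *
        (c * ∑ i, doublyRobustError (e i) (ehat i) (P i) (O i)) =
      c * ∑ i, e i := by
  simp_rw [mul_left_comm _ c, ← Finset.mul_sum]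
  rw [sum_prod_mul_sum_apply (fun i => bernoulliWeight (P i)) (fun i => sum_bernoulliWeight (P i))
    (fun i => doublyRobustError (e i) (ehat i) (P i))]
  simp_rw [sum_bernoulliWeight_mul_doublyRobustError _ _ (hP _)]

end DoublyRobust

/-- **Unbiasedness of the doubly robust (DR) estimator.**
For every prediction matrix `R̂` and every imputed-error matrix `ℓ̂`, the
expectation over the random observation matrix `O` (mutually independent
Bernoulli entries, `O p ~ Bernoulli (P p)`) of the DR estimator
`(1/(mn)) Σ_p { ℓ̂ p + O p · (ℓ(R p, R̂ p) − ℓ̂ p) / P p }` equals the ideal loss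
`(1/(mn)) Σ_p ℓ(R p, R̂ p)`.  The expectation is written explicitly as a sum over
all realizations `O : D → Bool`, each weighted by its product-Bernoulli probability. -/
theorem dr_estimator_unbiased
    (m n : ℕ) (hm : 1 ≤ m) (hn : 1 ≤ n)
    (Δ : ℝ) (hΔ : 0 < Δ)
    (ℓ : ℝ → ℝ → ℝ) (hℓ : ∀ a b : ℝ, ℓ a b ∈ Set.Icc (0 : ℝ) Δ)
    (R Rhat : Fin m → Fin n → ℝ)
    (lhat : Fin m → Fin n → ℝ)
    (P : Fin m → Fin n → ℝ) (hP : ∀ u i, P u i ∈ Set.Ioc (0 : ℝ) 1) :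
    ∑ O : Fin m × Fin n → Bool,
        (∏ p : Fin m × Fin n, if O p then P p.1 p.2 else 1 - P p.1 p.2) *
          ((1 / (m * n : ℝ)) *
            ∑ p : Fin m × Fin n,
              (lhat p.1 p.2 +
                (if O p then (1 : ℝ) else 0) *
                  (ℓ (R p.1 p.2) (Rhat p.1 p.2) - lhat p.1 p.2) / P p.1 p.2)) =
      (1 / (m * n : ℝ)) * ∑ p : Fin m × Fin n, ℓ (R p.1 p.2) (Rhat p.1 p.2) := by
  simpa only [bernoulliWeight, doublyRobustError] using
    dr_estimator_unbiased_general (ι := Fin m × Fin n) (1 / (m * n : ℝ))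
      (fun p => ℓ (R p.1 p.2) (Rhat p.1 p.2)) (fun p => lhat p.1 p.2) (fun p => P p.1 p.2)
      fun p => (hP p.1 p.2).1.ne'
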